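/- Let X be a real Banach space such that its dual X* contains no subspace isomorphic to ℓ∞. Let M : Σ → cw*k(X*) be a set-valued map defined on a σ-algebra Σ, taking values in the family of convex weak*-compact non-empty subsets of X*, such that the support map s(x,M) is countably additive for every x ∈ X. Then M is a strong multimeasure. -/

import Mathlib

/-!
Fix a disjoint sequence `Aₙ` and put `Cₙ = M(Aₙ)`.

*Unconditional convergence.* For a selection `fₙ ∈ Cₙ` and `x ∈ X` the number `fₙ(x)` lies between
`-s(-x, Cₙ)` and `s(x, Cₙ)`, so `∑ |fₙ(x)| < ∞` for every `x`. If `∑ fₙ` were not unconditionally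
convergent, there would be disjoint finite blocks with sums `yₖ` of norm at least `ε`, still with
`∑ |yₖ(x)| < ∞`. By the closed graph theorem `x ↦ (yₖ(x))ₖ` is a bounded operator `X → ℓ¹`, whose
adjoint is `ℓ∞ → X*`, `u ↦ ∑ uₖ yₖ`. Choose `xₖ` in the unit ball with `|yₖ(xₖ)| > ε / 2`. The rows
of the matrix `|yⱼ(xₖ)|` have bounded sums, so by Rosenthal's disjointification lemma its
off-diagonal row sums are at most `ε / 4` along a subsequence. Testing `∑ uⱼ yⱼ` on `xₖ` then shows
that the adjoint is bounded below, and `X*` would contain `ℓ∞`.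

*Equality of sets.* The same domination makes the sum map `∏ Cₙ → X*` weak*-continuous, so `∑ Cₙ` is
convex and weak*-compact. Its support function is `∑ s(x, Cₙ) = s(x, M(⋃ Aₙ))`, and the Hahn–Banach
theorem in the weak* topology gives `∑ Cₙ = M(⋃ Aₙ)`.
-/

/-- The series of sets `∑ₙ Cₙ` is unconditionally convergent: every selection is
(unconditionally) summable. -/
def UncondConvSeriesOfSets {X : Type*} [NormedAddCommGroup X] (C : ℕ → Set X) : Prop :=
  ∀ x : ℕ → X, (∀ n, x n ∈ C n) → Summable x

/-- The sum of the series of sets `∑ₙ Cₙ`: the set of all sums of selections. -/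
def seriesSumSet {X : Type*} [NormedAddCommGroup X] (C : ℕ → Set X) : Set X :=
  {s | ∃ x : ℕ → X, (∀ n, x n ∈ C n) ∧ HasSum x s}

/-- A set function on a σ-algebra, with values in a topological abelian monoid, is
countably additive. -/
def CountablyAdditive {Ω E : Type*} [MeasurableSpace Ω] [AddCommMonoid E]
    [TopologicalSpace E] (ν : Set Ω → E) : Prop :=
  ∀ A : ℕ → Set Ω, (∀ n, MeasurableSet (A n)) → Pairwise (Function.onFun Disjoint A) →
    HasSum (fun n => ν (A n)) (ν (⋃ n, A n))

/-- `M` is a strong multimeasure (closures and unconditional convergence taken in the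
norm topology). -/
def IsStrongMultimeasure {Ω X : Type*} [MeasurableSpace Ω] [NormedAddCommGroup X]
    (M : Set Ω → Set X) : Prop :=
  ∀ A : ℕ → Set Ω, (∀ n, MeasurableSet (A n)) → Pairwise (Function.onFun Disjoint A) →
    UncondConvSeriesOfSets (fun n => M (A n)) ∧
    closure (M (⋃ n, A n)) = closure (seriesSumSet fun n => M (A n))

/-- The weak* topology on `X*`: the topology of pointwise convergence on `X`. -/
def weakStarTop (X : Type*) [NormedAddCommGroup X] [NormedSpace ℝ X] :
    TopologicalSpace (X →L[ℝ] ℝ) :=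
  TopologicalSpace.induced (fun f : X →L[ℝ] ℝ => fun x : X => f x) Pi.topologicalSpace

/-- `Z` contains a subspace isomorphic to `ℓ∞`. -/
def ContainsIsoCopyOfLinfty (Z : Type*) [NormedAddCommGroup Z] [NormedSpace ℝ Z] : Prop :=
  ∃ T : lp (fun _ : ℕ => ℝ) ⊤ →L[ℝ] Z, ∃ c : ℝ, 0 < c ∧
    ∀ u : lp (fun _ : ℕ => ℝ) ⊤, c * ‖u‖ ≤ ‖T u‖

open scoped ENNReal
open Function

section Rosenthal

/-- The `k`-th row sum of a matrix with nonnegative entries, omitting the diagonal entry. -/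
noncomputable def offDiagRowSum {ι : Type*} (a : Matrix ι ι ℝ≥0∞) (k : ι) : ℝ≥0∞ :=
  ∑' j : ({k}ᶜ : Set ι), a k j

lemma offDiagRowSum_submatrix_le {ι κ : Type*} (a : Matrix ι ι ℝ≥0∞) {φ : κ → ι}
    (hφ : Injective φ) (k : κ) :
    offDiagRowSum (a.submatrix φ φ) k ≤ offDiagRowSum a (φ k) :=
  ENNReal.tsum_comp_le_tsum_of_injective
    (f := Set.MapsTo.restrict φ {k}ᶜ {φ k}ᶜ fun _ hj ↦ hφ.ne hj)
    ((Set.MapsTo.restrict_inj _).2 hφ.injOn) fun j ↦ a (φ k) j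

lemma offDiagRowSum_section_add_fiber_le {ι κ : Type*} (a : Matrix (ι × κ) (ι × κ) ℝ≥0∞)
    (m : ι → κ) (i : ι) :
    offDiagRowSum (a.submatrix (fun j ↦ (j, m j)) fun j ↦ (j, m j)) i +
        offDiagRowSum (a.submatrix (Prod.mk i) (Prod.mk i)) (m i) ≤
      offDiagRowSum a (i, m i) := by
  let e : ({i}ᶜ : Set ι) ⊕ ({m i}ᶜ : Set κ) → ({(i, m i)}ᶜ : Set (ι × κ)) :=
    Sum.elim (fun j ↦ ⟨(j, m j), fun h ↦ j.2 (congrArg Prod.fst h)⟩)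
      (fun l ↦ ⟨(i, l), fun h ↦ l.2 (congrArg Prod.snd h)⟩)
  have he : Injective e := by
    refine Injective.sumElim (fun j j' h ↦ ?_) (fun l l' h ↦ ?_) fun j l h ↦ ?_
    · exact Subtype.ext (congrArg (Prod.fst ∘ Subtype.val) h)
    · exact Subtype.ext (congrArg (Prod.snd ∘ Subtype.val) h)
    · exact j.2 (congrArg (Prod.fst ∘ Subtype.val) h)
  have hsplit : HasSum (fun p ↦ a (i, m i) (e p)) _ :=
    ENNReal.summable.hasSum.sum ENNReal.summable.hasSum
  exact hsplit.tsum_eq.symm.trans_le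
    (ENNReal.tsum_comp_le_tsum_of_injective he fun p ↦ a (i, m i) p)

/-- Rosenthal's argument: split `ℕ` into infinitely many infinite blocks. Either one of the blocks
works, or each block has a row whose off-diagonal sum within the block exceeds `δ`; along these
rows the off-diagonal sums are smaller by `δ`. -/
lemma exists_injective_offDiagRowSum_le_of_le_mul {δ : ℝ≥0∞} (hδ : δ ≠ ∞) (n : ℕ)
    (a : Matrix ℕ ℕ ℝ≥0∞) (ha : ∀ k, offDiagRowSum a k ≤ n * δ) :
    ∃ φ : ℕ → ℕ, Injective φ ∧ ∀ k, offDiagRowSum (a.submatrix φ φ) k ≤ δ := by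
  induction n generalizing a with
  | zero => exact ⟨id, injective_id, fun k ↦ (ha k).trans (by simp)⟩
  | succ n ih =>
    let b : Matrix (ℕ × ℕ) (ℕ × ℕ) ℝ≥0∞ := a.submatrix Nat.pairEquiv Nat.pairEquiv
    have hb_le (p : ℕ × ℕ) : offDiagRowSum b p ≤ n * δ + δ :=
      (offDiagRowSum_submatrix_le a Nat.pairEquiv.injective p).trans
        ((ha _).trans_eq (by push_cast; ring))
    by_cases hblock : ∃ i, ∀ l, offDiagRowSum (b.submatrix (Prod.mk i) (Prod.mk i)) l ≤ δ
    · obtain ⟨i, hi⟩ := hblock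
      exact ⟨Nat.pairEquiv ∘ Prod.mk i, Nat.pairEquiv.injective.comp (Prod.mk_right_injective i),
        hi⟩
    · push Not at hblock
      choose m hm using hblock
      have hsection_injective : Injective fun i ↦ (i, m i) := fun i j h ↦ congrArg Prod.fst h
      obtain ⟨φ, hφ, hle⟩ := ih (b.submatrix (fun i ↦ (i, m i)) fun i ↦ (i, m i)) fun i ↦
        (ENNReal.add_le_add_iff_right hδ).1 <|
          calc offDiagRowSum (b.submatrix (fun i ↦ (i, m i)) fun i ↦ (i, m i)) i + δ
          _ ≤ _ := by gcongr; exact (hm i).le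
          _ ≤ offDiagRowSum b (i, m i) := offDiagRowSum_section_add_fiber_le b m i
          _ ≤ n * δ + δ := hb_le _
      exact ⟨_, Nat.pairEquiv.injective.comp (hsection_injective.comp hφ), hle⟩

lemma exists_injective_tsum_compl_singleton_le {a : ℕ → ℕ → ℝ} (ha : ∀ k j, 0 ≤ a k j)
    (hsum : ∀ k, Summable (a k)) {C : ℝ} (hC : ∀ k, ∑' j, a k j ≤ C) {δ : ℝ} (hδ : 0 < δ) :
    ∃ φ : ℕ → ℕ, Injective φ ∧ ∀ k, ∑' j : ({k}ᶜ : Set ℕ), a (φ k) (φ j) ≤ δ := by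
  obtain ⟨n, hn⟩ := exists_nat_ge (C / δ)
  have hrow (k : ℕ) : offDiagRowSum (fun k j ↦ ENNReal.ofReal (a k j)) k ≤
      n * ENNReal.ofReal δ :=
    calc offDiagRowSum (fun k j ↦ ENNReal.ofReal (a k j)) k
    _ ≤ ∑' j, ENNReal.ofReal (a k j) :=
      ENNReal.tsum_comp_le_tsum_of_injective Subtype.val_injective _
    _ = ENNReal.ofReal (∑' j, a k j) := (ENNReal.ofReal_tsum_of_nonneg (ha k) (hsum k)).symm
    _ ≤ ENNReal.ofReal (n * δ) :=
      ENNReal.ofReal_le_ofReal ((hC k).trans ((div_le_iff₀ hδ).1 hn))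
    _ = n * ENNReal.ofReal δ := by
      rw [ENNReal.ofReal_mul n.cast_nonneg, ENNReal.ofReal_natCast]
  obtain ⟨φ, hφ, hle⟩ :=
    exists_injective_offDiagRowSum_le_of_le_mul ENNReal.ofReal_ne_top n _ hrow
  refine ⟨φ, hφ, fun k ↦ (ENNReal.ofReal_le_ofReal_iff hδ.le).1 ?_⟩
  have hsub : Summable fun j : ({k}ᶜ : Set ℕ) ↦ a (φ k) (φ j) :=
    (hsum (φ k)).comp_injective (hφ.comp Subtype.val_injective)
  rw [ENNReal.ofReal_tsum_of_nonneg (fun _ ↦ ha _ _) hsub]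
  exact hle k

end Rosenthal

section LinftyOperator

lemma norm_mul_norm_le_of_hasSum {ι : Type*} {u : lp (fun _ : ι ↦ ℝ) ∞} {v : ι → ℝ}
    (hv : Summable v) {s : ℝ} (hs : HasSum (fun j ↦ u j * v j) s) (k : ι) :
    ‖u k‖ * ‖v k‖ ≤ ‖s‖ + ‖u‖ * ∑' j : ({k}ᶜ : Set ι), ‖v j‖ := by
  have hdec : u k * v k + ∑' j : ({k}ᶜ : Set ι), u j * v j = s := by
    rw [← hs.tsum_eq, ← hs.summable.tsum_subtype_add_tsum_subtype_compl {k},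
      tsum_singleton k fun j ↦ u j * v j]
  have hoff : ‖∑' j : ({k}ᶜ : Set ι), u j * v j‖ ≤ ‖u‖ * ∑' j : ({k}ᶜ : Set ι), ‖v j‖ := by
    refine tsum_of_norm_bounded ((hv.norm.subtype _).hasSum.mul_left ‖u‖) fun j ↦ ?_
    exact norm_mul_le_of_le (lp.norm_apply_le_norm ENNReal.top_ne_zero u j) le_rfl
  calc ‖u k‖ * ‖v k‖ = ‖s - ∑' j : ({k}ᶜ : Set ι), u j * v j‖ := by
        rw [← hdec, add_sub_cancel_right, norm_mul]
    _ ≤ ‖s‖ + ‖u‖ * ∑' j : ({k}ᶜ : Set ι), ‖v j‖ := (norm_sub_le _ _).trans (by gcongr)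

variable {ι X : Type*} [NormedAddCommGroup X] [NormedSpace ℝ X] [CompleteSpace X]
  {y : ι → X →L[ℝ] ℝ}

/-- The bounded operator `X → ℓ¹`, `x ↦ (yₖ(x))ₖ`, attached to a pointwise summable family of
functionals. Unconditional and absolute summability agree in `ℝ`, and boundedness comes from the
closed graph theorem. -/
noncomputable def evalL1 (hy : ∀ x, Summable fun k ↦ y k x) :
    X →L[ℝ] lp (fun _ : ι ↦ ℝ) 1 :=
  ContinuousLinearMap.ofSeqClosedGraph
    (g := { toFun := fun x ↦ ⟨fun k ↦ y k x, memℓp_gen (by simpa using (hy x).abs)⟩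
            map_add' := fun x z ↦ by ext k; exact map_add (y k) x z
            map_smul' := fun c x ↦ by ext k; exact map_smul (y k) c x })
    fun u x v hu hv ↦ by
      ext k
      have hvk := ((lp.evalCLM ℝ (fun _ : ι ↦ ℝ) 1 k).continuous.tendsto v).comp hv
      exact tendsto_nhds_unique hvk (((y k).continuous.tendsto x).comp hu)

lemma evalL1_apply (hy : ∀ x, Summable fun k ↦ y k x) (x : X) (k : ι) :
    evalL1 hy x k = y k x := rfl

lemma tsum_norm_apply_le (hy : ∀ x, Summable fun k ↦ y k x) (x : X) :
    ∑' k, ‖y k x‖ ≤ ‖evalL1 hy‖ * ‖x‖ := by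
  have hnorm : ‖evalL1 hy x‖ = ∑' k, ‖y k x‖ := by
    simpa [evalL1_apply] using lp.norm_eq_tsum_rpow (by simp) (evalL1 hy x)
  exact hnorm ▸ (evalL1 hy).le_opNorm x

/-- The bounded operator `ℓ∞ → X*` taking `u` to the weak* sum `∑ uₖ yₖ`: the adjoint of `evalL1`,
restricted along the pairing of `ℓ∞` with `ℓ¹`. -/
noncomputable def linftyComb (hy : ∀ x, Summable fun k ↦ y k x) :
    lp (fun _ : ι ↦ ℝ) ∞ →L[ℝ] (X →L[ℝ] ℝ) :=
  (evalL1 hy).precomp ℝ ∘L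
    lp.dualPairing ∞ 1 (fun _ ↦ ContinuousLinearMap.mul ℝ ℝ) (K := 1)
      fun _ ↦ ContinuousLinearMap.opNorm_mul_le ℝ ℝ

lemma hasSum_linftyComb (hy : ∀ x, Summable fun k ↦ y k x) (u : lp (fun _ : ι ↦ ℝ) ∞) (x : X) :
    HasSum (fun k ↦ u k * y k x) (linftyComb hy u x) := by
  have hsum : Summable fun k ↦ u k * y k x :=
    ((hy x).norm.mul_left ‖u‖).of_norm_bounded fun k ↦
      norm_mul_le_of_le (lp.norm_apply_le_norm ENNReal.top_ne_zero u k) le_rfl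
  exact hsum.hasSum

lemma mul_norm_le_norm_linftyComb (hy : ∀ x, Summable fun k ↦ y k x) {x : ι → X}
    (hx : ∀ k, ‖x k‖ ≤ 1) {ε δ : ℝ} (hε : 0 < ε) (hdiag : ∀ k, ε ≤ ‖y k (x k)‖)
    (hoff : ∀ k, ∑' j : ({k}ᶜ : Set ι), ‖y j (x k)‖ ≤ δ) (u : lp (fun _ : ι ↦ ℝ) ∞) :
    (ε - δ) * ‖u‖ ≤ ‖linftyComb hy u‖ := by
  have hcoord (k : ι) : ε * ‖u k‖ ≤ ‖linftyComb hy u‖ + ‖u‖ * δ :=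
    calc ε * ‖u k‖ ≤ ‖u k‖ * ‖y k (x k)‖ := by
          rw [mul_comm]
          gcongr
          exact hdiag k
      _ ≤ ‖linftyComb hy u (x k)‖ + ‖u‖ * ∑' j : ({k}ᶜ : Set ι), ‖y j (x k)‖ :=
          norm_mul_norm_le_of_hasSum (hy (x k)) (hasSum_linftyComb hy u (x k)) k
      _ ≤ ‖linftyComb hy u‖ + ‖u‖ * δ := by
          gcongr
          · exact (linftyComb hy u).unit_le_opNorm _ (hx k)
          · exact hoff k
  rcases isEmpty_or_nonempty ι with hι | hι
  · simp [Subsingleton.elim u 0]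
  have hnorm : ‖u‖ ≤ (‖linftyComb hy u‖ + ‖u‖ * δ) / ε :=
    lp.norm_le_of_forall_le' _ fun k ↦ (le_div_iff₀' hε).2 (hcoord k)
  rw [le_div_iff₀' hε] at hnorm
  linarith

end LinftyOperator

section DiestelFaires

lemma exists_pairwise_disjoint_le_norm_sum_of_not_summable {ι E : Type*} [NormedAddCommGroup E]
    [CompleteSpace E] {f : ι → E} (hf : ¬ Summable f) :
    ∃ ε > 0, ∃ F : ℕ → Finset ι, Pairwise (onFun Disjoint F) ∧ ∀ k, ε ≤ ‖∑ i ∈ F k, f i‖ := by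
  classical
  rw [summable_iff_vanishing_norm] at hf
  push Not at hf
  obtain ⟨ε, hε, hblock⟩ := hf
  have : Std.Symm (Disjoint : Finset ι → Finset ι → Prop) := ⟨fun _ _ h ↦ h.symm⟩
  obtain ⟨F, hF, hdisj⟩ := exists_seq_of_forall_finset_exists'
    (fun t : Finset ι ↦ ε ≤ ‖∑ i ∈ t, f i‖) Disjoint fun s _ ↦ by
      obtain ⟨t, ht, hεt⟩ := hblock (s.biUnion id)
      exact ⟨t, hεt, fun r hr ↦ ((Finset.disjoint_biUnion_right _ _ _).1 ht r hr).symm⟩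
  exact ⟨ε, hε, F, hdisj, hF⟩

lemma summable_sum_of_pairwise_disjoint {ι κ E : Type*} [AddCommGroup E] [UniformSpace E]
    [IsUniformAddGroup E] [CompleteSpace E] {f : ι → E} (hf : Summable f) {F : κ → Finset ι}
    (hF : Pairwise (onFun Disjoint F)) : Summable fun k ↦ ∑ i ∈ F k, f i := by
  have hinj : Injective fun p : (k : κ) × F k ↦ (p.2 : ι) := by
    rintro ⟨k, i, hi⟩ ⟨l, j, hj⟩ (rfl : i = j)
    obtain rfl : k = l := hF.eq fun h ↦ Finset.disjoint_left.1 h hi hj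
    rfl
  simpa only [comp_apply, Finset.tsum_subtype] using (hf.comp_injective hinj).sigma

variable {ι X : Type*} [NormedAddCommGroup X] [NormedSpace ℝ X] [CompleteSpace X]

lemma containsIsoCopyOfLinfty_of_le_norm {y : ℕ → X →L[ℝ] ℝ}
    (hy : ∀ x, Summable fun k ↦ y k x) {ε : ℝ} (hε : 0 < ε) (hle : ∀ k, ε ≤ ‖y k‖) :
    ContainsIsoCopyOfLinfty (X →L[ℝ] ℝ) := by
  choose x hx hxy using fun k ↦
    (y k).exists_lt_apply_of_lt_opNorm ((half_lt_self hε).trans_le (hle k))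
  have hrow (k : ℕ) : ∑' j, ‖y j (x k)‖ ≤ ‖evalL1 hy‖ :=
    (tsum_norm_apply_le hy (x k)).trans (mul_le_of_le_one_right (norm_nonneg _) (hx k).le)
  obtain ⟨φ, hφ, hoff⟩ := exists_injective_tsum_compl_singleton_le
    (fun _ _ ↦ norm_nonneg _) (fun k ↦ (hy (x k)).norm) hrow (δ := ε / 4) (by positivity)
  exact ⟨linftyComb fun x ↦ (hy x).comp_injective hφ, ε / 2 - ε / 4, by linarith,
    mul_norm_le_norm_linftyComb _ (fun k ↦ (hx (φ k)).le) (half_pos hε)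
      (fun k ↦ (hxy (φ k)).le) hoff⟩

/-- The Diestel–Faires theorem for duals. -/
theorem summable_of_forall_summable_apply (hX : ¬ ContainsIsoCopyOfLinfty (X →L[ℝ] ℝ))
    {f : ι → X →L[ℝ] ℝ} (hf : ∀ x, Summable fun i ↦ f i x) : Summable f := by
  by_contra hns
  obtain ⟨ε, hε, F, hdisj, hle⟩ := exists_pairwise_disjoint_le_norm_sum_of_not_summable hns
  refine hX (containsIsoCopyOfLinfty_of_le_norm (fun x ↦ ?_) hε hle)
  simpa only [sum_apply] using summable_sum_of_pairwise_disjoint (hf x) hdisj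

end DiestelFaires

section SupportFunction

variable {X : Type*} [NormedAddCommGroup X] [NormedSpace ℝ X] {C D : Set (X →L[ℝ] ℝ)}

/-- The support function `s(x, C)` of a set of functionals. By the conventions of `sSup` in `ℝ`, it
is `0` where the supremum does not exist. -/
noncomputable def supportFun (x : X) (C : Set (X →L[ℝ] ℝ)) : ℝ :=
  sSup ((fun f : X →L[ℝ] ℝ ↦ f x) '' C)

lemma isCompact_weakStarTop_iff :
    @IsCompact (X →L[ℝ] ℝ) (weakStarTop X) C ↔ IsCompact (WeakDual.toStrongDual ⁻¹' C) :=
  Iff.rfl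

lemma isCompact_image_apply (hC : IsCompact (WeakDual.toStrongDual ⁻¹' C)) (x : X) :
    IsCompact ((fun f : X →L[ℝ] ℝ ↦ f x) '' C) :=
  hC.image (WeakDual.eval_continuous x)

lemma apply_le_supportFun (hC : IsCompact (WeakDual.toStrongDual ⁻¹' C)) (x : X)
    {f : X →L[ℝ] ℝ} (hf : f ∈ C) : f x ≤ supportFun x C :=
  le_csSup (isCompact_image_apply hC x).bddAbove ⟨f, hf, rfl⟩

lemma norm_apply_le_supportFun (hC : IsCompact (WeakDual.toStrongDual ⁻¹' C)) (x : X)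
    {f : X →L[ℝ] ℝ} (hf : f ∈ C) : ‖f x‖ ≤ |supportFun x C| + |supportFun (-x) C| := by
  have hpos : f x ≤ supportFun x C := apply_le_supportFun hC x hf
  have hneg : -f x ≤ supportFun (-x) C := map_neg f x ▸ apply_le_supportFun hC (-x) hf
  rw [Real.norm_eq_abs]
  grind

lemma exists_mem_apply_eq_supportFun (hC : IsCompact (WeakDual.toStrongDual ⁻¹' C))
    (hne : C.Nonempty) (x : X) : ∃ f ∈ C, f x = supportFun x C :=
  (isCompact_image_apply hC x).sSup_mem (hne.image _)

lemma mem_of_forall_apply_le_supportFun (hC : IsCompact (WeakDual.toStrongDual ⁻¹' C))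
    (hconv : Convex ℝ C) (hne : C.Nonempty) {f : X →L[ℝ] ℝ}
    (hf : ∀ x, f x ≤ supportFun x C) : f ∈ C := by
  by_contra hfC
  have hconv' : Convex ℝ (WeakDual.toStrongDual ⁻¹' C) :=
    hconv.linear_preimage WeakDual.toStrongDual.toLinearMap
  have : LocallyConvexSpace ℝ (WeakDual ℝ X) :=
    inferInstanceAs (LocallyConvexSpace ℝ (WeakBilin (topDualPairing ℝ X)))
  obtain ⟨ℓ, r, hCr, hrf⟩ := geometric_hahn_banach_closed_point hconv' hC.isClosed
    (x := StrongDual.toWeakDual f) hfC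
  obtain ⟨x, rfl⟩ := LinearMap.dualEmbedding_surjective (topDualPairing ℝ X) ℓ
  obtain ⟨g, hg, hgx⟩ := exists_mem_apply_eq_supportFun hC hne x
  have hg_lt : g x < r := hCr (StrongDual.toWeakDual g) hg
  have hlt_f : r < f x := hrf
  linarith [hf x]

lemma eq_of_forall_supportFun_eq (hC : IsCompact (WeakDual.toStrongDual ⁻¹' C))
    (hCconv : Convex ℝ C) (hCne : C.Nonempty) (hD : IsCompact (WeakDual.toStrongDual ⁻¹' D))
    (hDconv : Convex ℝ D) (hDne : D.Nonempty) (h : ∀ x, supportFun x C = supportFun x D) :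
    C = D :=
  Set.Subset.antisymm
    (fun _ hf ↦ mem_of_forall_apply_le_supportFun hD hDconv hDne fun x ↦
      h x ▸ apply_le_supportFun hC x hf)
    (fun _ hf ↦ mem_of_forall_apply_le_supportFun hC hCconv hCne fun x ↦
      h x ▸ apply_le_supportFun hD x hf)

end SupportFunction

section SeriesOfSets

lemma convex_seriesSumSet {E : Type*} [NormedAddCommGroup E] [NormedSpace ℝ E]
    {C : ℕ → Set E} (hC : ∀ n, Convex ℝ (C n)) : Convex ℝ (seriesSumSet C) := by
  rintro s ⟨f, hf, hs⟩ t ⟨g, hg, ht⟩ a b ha hb hab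
  exact ⟨fun n ↦ a • f n + b • g n, fun n ↦ hC n (hf n) (hg n) ha hb hab,
    (hs.const_smul a).add (ht.const_smul b)⟩

lemma nonempty_seriesSumSet {E : Type*} [NormedAddCommGroup E] {C : ℕ → Set E}
    (hC : UncondConvSeriesOfSets C) (hne : ∀ n, (C n).Nonempty) : (seriesSumSet C).Nonempty := by
  choose f hf using hne
  exact ⟨_, f, hf, (hC f hf).hasSum⟩

lemma image_tsum_pi_eq_seriesSumSet {E : Type*} [NormedAddCommGroup E] {C : ℕ → Set E}
    (hC : UncondConvSeriesOfSets C) : (fun f ↦ ∑' n, f n) '' Set.univ.pi C = seriesSumSet C := by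
  ext s
  constructor
  · rintro ⟨f, hf, rfl⟩
    exact ⟨f, fun n ↦ hf n trivial, (hC f fun n ↦ hf n trivial).hasSum⟩
  · rintro ⟨f, hf, hs⟩
    exact ⟨f, fun n _ ↦ hf n, hs.tsum_eq⟩

variable {X : Type*} [NormedAddCommGroup X] [NormedSpace ℝ X] {C : ℕ → Set (X →L[ℝ] ℝ)}

lemma summable_abs_supportFun_add (hsum : ∀ x, Summable fun n ↦ supportFun x (C n)) (x : X) :
    Summable fun n ↦ |supportFun x (C n)| + |supportFun (-x) (C n)| :=
  (hsum x).abs.add (hsum (-x)).abs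

lemma uncondConvSeriesOfSets_of_summable_supportFun [CompleteSpace X]
    (hX : ¬ ContainsIsoCopyOfLinfty (X →L[ℝ] ℝ))
    (hC : ∀ n, IsCompact (WeakDual.toStrongDual ⁻¹' C n))
    (hsum : ∀ x, Summable fun n ↦ supportFun x (C n)) : UncondConvSeriesOfSets C :=
  fun _ hf ↦ summable_of_forall_summable_apply hX fun x ↦
    (summable_abs_supportFun_add hsum x).of_norm_bounded
      fun n ↦ norm_apply_le_supportFun (hC n) x (hf n)

lemma isCompact_seriesSumSet (hC : ∀ n, IsCompact (WeakDual.toStrongDual ⁻¹' C n))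
    (hunc : UncondConvSeriesOfSets C) (hsum : ∀ x, Summable fun n ↦ supportFun x (C n)) :
    IsCompact (WeakDual.toStrongDual ⁻¹' seriesSumSet C) := by
  let P : Set (ℕ → WeakDual ℝ X) := Set.univ.pi fun n ↦ WeakDual.toStrongDual ⁻¹' C n
  let sumMap (f : ℕ → WeakDual ℝ X) : WeakDual ℝ X :=
    StrongDual.toWeakDual (∑' n, WeakDual.toStrongDual (f n))
  have hsumMap (f : P) (x : X) : sumMap f x = ∑' n, f.1 n x :=
    ((ContinuousLinearMap.apply ℝ ℝ x).hasSum
      (hunc _ fun n ↦ f.2 n trivial).hasSum).tsum_eq.symm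
  have hcont : ContinuousOn sumMap P := by
    rw [continuousOn_iff_continuous_domRestrict]
    refine WeakDual.continuous_of_continuous_eval fun x ↦ ?_
    simp only [Set.domRestrict_apply, hsumMap]
    exact continuous_tsum
      (fun n ↦ (WeakDual.eval_continuous x).comp
        ((continuous_apply n).comp continuous_subtype_val))
      (summable_abs_supportFun_add hsum x)
      fun n f ↦ norm_apply_le_supportFun (hC n) x (f.2 n trivial)
  have himage : sumMap '' P = WeakDual.toStrongDual ⁻¹' seriesSumSet C :=
    image_tsum_pi_eq_seriesSumSet hunc
  exact himage ▸ (isCompact_univ_pi hC).image_of_continuousOn hcont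

lemma hasSum_supportFun_seriesSumSet (hC : ∀ n, IsCompact (WeakDual.toStrongDual ⁻¹' C n))
    (hne : ∀ n, (C n).Nonempty) (hunc : UncondConvSeriesOfSets C) (x : X) :
    HasSum (fun n ↦ supportFun x (C n)) (supportFun x (seriesSumSet C)) := by
  choose g hg hgx using fun n ↦ exists_mem_apply_eq_supportFun (hC n) (hne n) x
  have happly {f : ℕ → X →L[ℝ] ℝ} {s : X →L[ℝ] ℝ} (hs : HasSum f s) :
      HasSum (fun n ↦ f n x) (s x) := (ContinuousLinearMap.apply ℝ ℝ x).hasSum hs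
  have hmax : HasSum (fun n ↦ supportFun x (C n)) ((∑' n, g n) x) := by
    simpa only [hgx] using happly (hunc g hg).hasSum
  suffices IsGreatest ((fun f : X →L[ℝ] ℝ ↦ f x) '' seriesSumSet C) ((∑' n, g n) x) from
    (show supportFun x (seriesSumSet C) = _ from this.csSup_eq) ▸ hmax
  refine ⟨⟨_, ⟨g, hg, (hunc g hg).hasSum⟩, rfl⟩, ?_⟩
  rintro _ ⟨s, ⟨f, hf, hs⟩, rfl⟩
  exact hasSum_le (fun n ↦ apply_le_supportFun (hC n) x (hf n)) (happly hs) hmax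

theorem eq_seriesSumSet_of_hasSum_supportFun {D : Set (X →L[ℝ] ℝ)}
    (hC : ∀ n, IsCompact (WeakDual.toStrongDual ⁻¹' C n)) (hCconv : ∀ n, Convex ℝ (C n))
    (hCne : ∀ n, (C n).Nonempty) (hunc : UncondConvSeriesOfSets C)
    (hD : IsCompact (WeakDual.toStrongDual ⁻¹' D)) (hDconv : Convex ℝ D) (hDne : D.Nonempty)
    (hsum : ∀ x, HasSum (fun n ↦ supportFun x (C n)) (supportFun x D)) :
    D = seriesSumSet C :=
  eq_of_forall_supportFun_eq hD hDconv hDne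
    (isCompact_seriesSumSet hC hunc fun x ↦ (hsum x).summable) (convex_seriesSumSet hCconv)
    (nonempty_seriesSumSet hunc hCne) fun x ↦
      (hsum x).unique (hasSum_supportFun_seriesSumSet hC hCne hunc x)

end SeriesOfSets

/-- **Musiał.** Let `X` be a Banach space whose dual `X*` contains no
subspace isomorphic to `ℓ∞`. If `M : Σ → cw*k(X*)` takes convex, weak*-compact,
non-empty values and `s(x, M)` is countably additive for every `x ∈ X`, then `M` is a
strong multimeasure. -/
theorem statement7 {Ω X : Type*} [MeasurableSpace Ω]
    [NormedAddCommGroup X] [NormedSpace ℝ X] [CompleteSpace X]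
    (hX : ¬ ContainsIsoCopyOfLinfty (X →L[ℝ] ℝ))
    (M : Set Ω → Set (X →L[ℝ] ℝ))
    (hne : ∀ A : Set Ω, MeasurableSet A → (M A).Nonempty)
    (hconv : ∀ A : Set Ω, MeasurableSet A → Convex ℝ (M A))
    (hcpt : ∀ A : Set Ω, MeasurableSet A → @IsCompact (X →L[ℝ] ℝ) (weakStarTop X) (M A))
    (hca : ∀ x : X, CountablyAdditive (fun A => sSup ((fun f : X →L[ℝ] ℝ => f x) '' M A))) :
    IsStrongMultimeasure M := by
  intro A hA hdisj
  have hU : MeasurableSet (⋃ n, A n) := .iUnion hA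
  have hweak (B : Set Ω) (hB : MeasurableSet B) : IsCompact (WeakDual.toStrongDual ⁻¹' M B) :=
    isCompact_weakStarTop_iff.1 (hcpt B hB)
  have hsum (x : X) : HasSum (fun n ↦ supportFun x (M (A n))) (supportFun x (M (⋃ n, A n))) :=
    hca x A hA hdisj
  have hunc : UncondConvSeriesOfSets fun n ↦ M (A n) :=
    uncondConvSeriesOfSets_of_summable_supportFun hX (fun n ↦ hweak _ (hA n))
      fun x ↦ (hsum x).summable
  exact ⟨hunc, congrArg closure <| eq_seriesSumSet_of_hasSum_supportFun
    (fun n ↦ hweak _ (hA n)) (fun n ↦ hconv _ (hA n)) (fun n ↦ hne _ (hA n)) hunc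
    (hweak _ hU) (hconv _ hU) (hne _ hU) hsum⟩
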